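/- arXiv:2501.01812 — 2 statements merged into one kernel-verified Lean document; each statement's English description precedes it below -/
import Mathlib

section
/- Let Π be a set of words over the two-letter alphabet {∀, ∃} that is closed relative to subwords, such that Π ⊆ P₁ ∪ P₂ and the word ∀∀∀ does not belong to Π. Then Π ⊆ P₂. -/
/-- The two-letter alphabet `{∀, ∃}` of quantifier symbols. -/
inductive QSym where
  | fa : QSym  -- the letter ∀
  | ex : QSym  -- the letter ∃
  deriving DecidableEq

/-- `P₁ = {∃^i ∀^j : i, j ∈ ℕ}`. -/
def P1 : Set (List QSym) :=
  {w | ∃ i j : ℕ, w = List.replicate i QSym.ex ++ List.replicate j QSym.fa}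

/-- `P₂ = {∃^i ∀^j ∃^k : i, k ∈ ℕ, j ≤ 2}`. -/
def P2 : Set (List QSym) :=
  {w | ∃ i j k : ℕ, j ≤ 2 ∧
    w = List.replicate i QSym.ex ++ List.replicate j QSym.fa ++ List.replicate k QSym.ex}

/-- `P₃ = {∃^i ∀^j : i ∈ ℕ, j ≤ 2}`. -/
def P3 : Set (List QSym) :=
  {w | ∃ i j : ℕ, j ≤ 2 ∧ w = List.replicate i QSym.ex ++ List.replicate j QSym.fa}

/-- A set of words is closed relative to subwords if it contains every word obtained from
one of its members by removing some letters (i.e. every sublist of a member). -/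
def SubwordClosed (Pi : Set (List QSym)) : Prop :=
  ∀ w ∈ Pi, ∀ u : List QSym, u.Sublist w → u ∈ Pi

/-- if `Π` is closed relative to subwords, `Π ⊆ P₁ ∪ P₂` and `∀∀∀ ∉ Π`,
then `Π ⊆ P₂`. -/
theorem stmt_5 (Pi : Set (List QSym)) (hclosed : SubwordClosed Pi)
    (hsub : Pi ⊆ P1 ∪ P2)
    (hfff : [QSym.fa, QSym.fa, QSym.fa] ∉ Pi) :
    Pi ⊆ P2 := by
  intro w hw
  rcases hsub hw with ⟨i, j, rfl⟩ | h
  · by_cases hj : j ≤ 2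
    · exact ⟨i, j, 0, hj, by simp⟩
    · exfalso
      apply hfff
      apply hclosed _ hw
      have h3 : (List.replicate 3 QSym.fa).Sublist (List.replicate j QSym.fa) :=
        (List.replicate_sublist_replicate QSym.fa).2 (by omega)
      exact h3.trans (List.sublist_append_right _ _)
  · exact h
end

section
/- Let n ≥ 1 and let Π₁, …, Πₙ be nonempty sets of words over the alphabet {∀, ∃}, each closed relative to subwords, with Πᵢ ⊆ P₁ ∪ P₂ for every i, and suppose there exist no indices i ≠ j such that the word ∀∃ belongs to Πᵢ and the word ∀∀∀ belongs to Πⱼ. Then at least one of the following holds: (1) Πᵢ ⊆ P₁ for every i; (2) Πᵢ ⊆ P₂ for every i; (3) there exists an index i₀ such that Πᵢ ⊆ P₃ for every i ≠ i₀. -/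
theorem aux_P1 (w : List QSym) (hw : w ∈ P1 ∪ P2)
    (h : ¬ [QSym.fa, QSym.ex].Sublist w) : w ∈ P1 := by
  rcases hw with hw | ⟨i, j, k, hj, rfl⟩
  · exact hw
  · rcases j with _ | j
    · exact ⟨i + k, 0, by simp⟩
    · rcases k with _ | k
      · exact ⟨i, j + 1, by simp⟩
      · exfalso
        apply h
        have h1 : [QSym.fa].Sublist (List.replicate i QSym.ex ++ List.replicate (j+1) QSym.fa) := by
          simp
        have h2 : [QSym.ex].Sublist (List.replicate (k+1) QSym.ex) := by
          simp
        exact h1.append h2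

theorem aux_P3 (w : List QSym) (hw : w ∈ P1)
    (h : ¬ [QSym.fa, QSym.fa, QSym.fa].Sublist w) : w ∈ P3 := by
  obtain ⟨i, j, rfl⟩ := hw
  refine ⟨i, j, ?_, rfl⟩
  by_contra hj
  apply h
  have h1 : (List.replicate 3 QSym.fa).Sublist (List.replicate j QSym.fa) :=
    (List.replicate_sublist_replicate _).2 (by omega)
  exact h1.trans (List.sublist_append_right _ _)

theorem aux_P2 (w : List QSym) (hw : w ∈ P1 ∪ P2)
    (h : ¬ [QSym.fa, QSym.fa, QSym.fa].Sublist w) : w ∈ P2 := by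
  rcases hw with hw | hw
  · obtain ⟨i, j, hj, rfl⟩ := aux_P3 w hw h
    exact ⟨i, j, 0, hj, by simp⟩
  · exact hw

/-- let `Π₁, …, Πₙ` (`n ≥ 1`) be nonempty subword-closed sets of words with
`Πᵢ ⊆ P₁ ∪ P₂` for all `i`, such that there are no indices `i ≠ j` with `∀∃ ∈ Πᵢ` and
`∀∀∀ ∈ Πⱼ`. Then all `Πᵢ ⊆ P₁`, or all `Πᵢ ⊆ P₂`, or there is an index `i₀` such that
`Πᵢ ⊆ P₃` for every `i ≠ i₀`. -/
theorem stmt_7 (n : ℕ) (hn : 1 ≤ n) (Pi : Fin n → Set (List QSym))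
    (hne : ∀ i, (Pi i).Nonempty)
    (hclosed : ∀ i, SubwordClosed (Pi i))
    (hsub : ∀ i, Pi i ⊆ P1 ∪ P2)
    (hnotboth : ¬ ∃ i j : Fin n, i ≠ j ∧
      [QSym.fa, QSym.ex] ∈ Pi i ∧ [QSym.fa, QSym.fa, QSym.fa] ∈ Pi j) :
    (∀ i, Pi i ⊆ P1) ∨ (∀ i, Pi i ⊆ P2) ∨
      ∃ i₀ : Fin n, ∀ i : Fin n, i ≠ i₀ → Pi i ⊆ P3 := by
  by_cases h1 : ∀ i, Pi i ⊆ P1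
  · exact Or.inl h1
  by_cases h2 : ∀ i, Pi i ⊆ P2
  · exact Or.inr (Or.inl h2)
  refine Or.inr (Or.inr ?_)
  have e1 : ∃ i, [QSym.fa, QSym.ex] ∈ Pi i := by
    by_contra hc
    exact h1 fun i w hw => aux_P1 w (hsub i hw) fun hs => hc ⟨i, hclosed i w hw _ hs⟩
  have e2 : ∃ i, [QSym.fa, QSym.fa, QSym.fa] ∈ Pi i := by
    by_contra hc
    exact h2 fun i w hw => aux_P2 w (hsub i hw) fun hs => hc ⟨i, hclosed i w hw _ hs⟩
  obtain ⟨a, ha⟩ := e1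
  obtain ⟨b, hb⟩ := e2
  have hab : a = b := by
    by_contra hne'
    exact hnotboth ⟨a, b, hne', ha, hb⟩
  subst hab
  refine ⟨a, fun k hk w hw => ?_⟩
  refine aux_P3 w (aux_P1 w (hsub k hw) fun hs => ?_) fun hs => ?_
  · exact hnotboth ⟨k, a, hk, hclosed k w hw _ hs, hb⟩
  · exact hnotboth ⟨a, k, hk.symm, ha, hclosed k w hw _ hs⟩
end
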